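/- For n = 1 and λ = 1/2, the operator L^{(1)} = −(1/16)·(ξ_1∘D − 2E'∘(∂/∂u_1))∘D factors as L^{(1)} = (1/16)·(E' + 1/2)∘(∂³/(∂u_1² ∂ξ_1)); equivalently, for all ψ ∈ A = ℂ[u_1, ξ_1], E'(E'+1)(C^{1/2}_2(ξ_1, ψ)) = (1/16)·(E' + 1/2)(∂³ψ/(∂u_1² ∂ξ_1)). -/

import Mathlib

open MvPolynomial

/-- The polynomial symbol algebra `A = ℂ[u₁,…,uₙ,ξ₁,…,ξₙ]`: variables `Sum.inl i` are the
`uᵢ` and variables `Sum.inr i` are the `ξᵢ`. -/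
abbrev PolA (n : ℕ) := MvPolynomial (Fin n ⊕ Fin n) ℂ

namespace LO

/-- ξ-degree of a monomial exponent. -/
def xiDeg {n : ℕ} (d : (Fin n ⊕ Fin n) →₀ ℕ) : ℕ :=
  ∑ i : Fin n, d (Sum.inr i)

/-- `c(E)`: the operator multiplying the ξ-degree-`m` component by `c m`. -/
noncomputable def cE {n : ℕ} (c : ℕ → ℂ) (φ : PolA n) : PolA n :=
  ∑ d ∈ φ.support, monomial d (c (xiDeg d) * coeff d φ)

/-- `D = Σᵢ ∂²/∂uᵢ∂ξᵢ`. -/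
noncomputable def Dop {n : ℕ} (φ : PolA n) : PolA n :=
  ∑ i : Fin n, pderiv (Sum.inl i) (pderiv (Sum.inr i) φ)

/-- The scalar `h^λ_d(m)`. -/
noncomputable def hScal (n : ℕ) (lam : ℂ) (d m : ℕ) : ℂ :=
  (d.factorial : ℂ)⁻¹ *
    ∏ j ∈ Finset.range d,
      ((m : ℂ) + (j : ℂ) + lam * ((n : ℂ) + 1)) /
        (2 * (m : ℂ) + (j : ℂ) + (n : ℂ) + (d : ℂ))

/-- The scalar `g^λ_d(m)`. -/
noncomputable def gScal (n : ℕ) (lam : ℂ) (d m : ℕ) : ℂ :=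
  (d.factorial : ℂ)⁻¹ *
    ∏ j ∈ Finset.range d,
      (-(m : ℂ) - (j : ℂ) - lam * ((n : ℂ) + 1)) /
        (2 * (m : ℂ) + (j : ℂ) + (n : ℂ) + 1)

/-- `bh^λ_d = h^λ_d(E) ∘ D^d` (equal to the identity for `d = 0`). -/
noncomputable def bh {n : ℕ} (lam : ℂ) (d : ℕ) (φ : PolA n) : PolA n :=
  cE (hScal n lam d) (Dop^[d] φ)

/-- `bg^λ_d = g^λ_d(E) ∘ D^d` (equal to the identity for `d = 0`). -/
noncomputable def bg {n : ℕ} (lam : ℂ) (d : ℕ) (φ : PolA n) : PolA n :=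
  cE (gScal n lam d) (Dop^[d] φ)

/-- `N_k(φ,ψ) = (1/k!) Σ_{α ∈ {1,…,n}^k} ∂^kφ/∂ξ_α · ∂^kψ/∂u_α`. -/
noncomputable def Nop {n : ℕ} (k : ℕ) (φ ψ : PolA n) : PolA n :=
  (k.factorial : ℂ)⁻¹ •
    ∑ α : Fin k → Fin n,
      ((List.ofFn α).foldr (fun i acc => pderiv (Sum.inr i) acc) φ) *
      ((List.ofFn α).foldr (fun i acc => pderiv (Sum.inl i) acc) ψ)

/-- The coefficient `C^λ_p` of the Lecomte–Ovsienko star product. -/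
noncomputable def C (n : ℕ) (lam : ℂ) (p : ℕ) (φ ψ : PolA n) : PolA n :=
  ∑ i ∈ Finset.range (p + 1), ∑ j ∈ Finset.range (p + 1),
    ∑ k ∈ Finset.range (p + 1), ∑ m ∈ Finset.range (p + 1),
      if i + j + k + m = p then bg lam m (Nop k (bh lam i φ) (bh lam j ψ)) else 0

/-- The Poisson bracket `{φ,ψ}`. -/
noncomputable def pb {n : ℕ} (φ ψ : PolA n) : PolA n :=
  ∑ i : Fin n,
    (pderiv (Sum.inr i) φ * pderiv (Sum.inl i) ψ
      - pderiv (Sum.inl i) φ * pderiv (Sum.inr i) ψ)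

/-- `φ ∈ A^m` (ξ-homogeneous of degree `m`; for `m < 0` this forces `φ = 0`). -/
def IsXiHomog {n : ℕ} (m : ℤ) (φ : PolA n) : Prop :=
  ∀ d ∈ φ.support, (xiDeg d : ℤ) = m

/-- The set of spanning momentum functions of the projective `sl_{n+1}(ℝ)`-action. -/
noncomputable def momSet (n : ℕ) : Set (PolA n) :=
  (Set.range fun i : Fin n => (X (Sum.inr i) : PolA n)) ∪
  (Set.range fun ij : Fin n × Fin n =>
    (X (Sum.inl ij.1) * X (Sum.inr ij.2) : PolA n)) ∪
  (Set.range fun i : Fin n =>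
    (X (Sum.inl i) * ∑ k : Fin n, X (Sum.inl k) * X (Sum.inr k) : PolA n))

/-- The span `M` of the momentum functions. -/
noncomputable def momSpan (n : ℕ) : Submodule ℂ (PolA n) := Submodule.span ℂ (momSet n)

/-- The Weyl algebra `W` of differential operators with polynomial coefficients,
as a subalgebra of `End_ℂ(A)`. -/
noncomputable def Weyl (n : ℕ) : Subalgebra ℂ (Module.End ℂ (PolA n)) :=
  Algebra.adjoin ℂ
    ((Set.range fun i : Fin n =>
        (LinearMap.mulLeft ℂ (X (Sum.inl i)) : Module.End ℂ (PolA n))) ∪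
     (Set.range fun i : Fin n =>
        (LinearMap.mulLeft ℂ (X (Sum.inr i)) : Module.End ℂ (PolA n))) ∪
     (Set.range fun v : Fin n ⊕ Fin n =>
        ((pderiv v).toLinearMap : Module.End ℂ (PolA n))))

/-- A bilinear map `B : A × A → A` is bidifferential if it is a finite sum
`B(φ,ψ) = Σ_α A_α(φ)·B_α(ψ)` with `A_α, B_α` in the Weyl algebra. -/
def Bidiff (n : ℕ) (B : PolA n → PolA n → PolA n) : Prop :=
  ∃ (N : ℕ) (Aop Bop : Fin N → Weyl n),
    ∀ φ ψ : PolA n,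
      B φ ψ = ∑ α : Fin N,
        (Aop α : Module.End ℂ (PolA n)) φ * (Bop α : Module.End ℂ (PolA n)) ψ

/-- The scalar by which `T_p = ∏_{i=1}^{⌊p/2⌋}(E'+i)` acts on `A^m`. -/
noncomputable def TScal (n p m : ℕ) : ℂ :=
  ∏ i ∈ Finset.Icc 1 (p / 2), ((m : ℂ) + (n : ℂ) / 2 + (i : ℂ))

/-- The scalar by which `S_p = ∏_{i=1}^{⌊p/2⌋}(E'−i)` acts on `A^m`. -/
noncomputable def SScal (n p m : ℕ) : ℂ :=
  ∏ i ∈ Finset.Icc 1 (p / 2), ((m : ℂ) + (n : ℂ) / 2 - (i : ℂ))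

/-- The operator `T_p`. -/
noncomputable def Tp (n p : ℕ) : PolA n → PolA n := cE (TScal n p)

/-- The operator `S_p`. -/
noncomputable def Sp (n p : ℕ) : PolA n → PolA n := cE (SScal n p)

/-- The fiberwise Euler operator `E = Σ ξᵢ ∂/∂ξᵢ` as an endomorphism. -/
noncomputable def Elin (n : ℕ) : Module.End ℂ (PolA n) :=
  ∑ i : Fin n,
    (LinearMap.mulLeft ℂ (X (Sum.inr i)) : Module.End ℂ (PolA n)) ∘ₗ
      (pderiv (Sum.inr i)).toLinearMap

/-- `E' = E + n/2` as an endomorphism. -/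
noncomputable def E'lin (n : ℕ) : Module.End ℂ (PolA n) :=
  Elin n + ((n : ℂ) / 2) • 1

/-- `D` as an endomorphism. -/
noncomputable def Dlin (n : ℕ) : Module.End ℂ (PolA n) :=
  ∑ i : Fin n,
    ((pderiv (Sum.inl i)).toLinearMap : Module.End ℂ (PolA n)) ∘ₗ
      (pderiv (Sum.inr i)).toLinearMap

/-- `L^{(m)} = −(1/16)(ξ_m∘D − 2E'∘∂/∂u_m)∘D`. -/
noncomputable def Lop (n : ℕ) (m : Fin n) : Module.End ℂ (PolA n) :=
  (-(1 / 16 : ℂ)) •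
    (((LinearMap.mulLeft ℂ (X (Sum.inr m)) : Module.End ℂ (PolA n)) ∘ₗ Dlin n
        - (2 : ℂ) • (E'lin n ∘ₗ (pderiv (Sum.inl m)).toLinearMap)) ∘ₗ Dlin n)

end LO

/-!
For every `n` the symbol `ξᵢ` satisfies `E'(E' + 1) C^{1/2}_2(ξᵢ, ψ) = L^{(i)} ψ`.  Only the zeroth
and first derivatives of `ξᵢ` contribute to `C_2(ξᵢ, ψ)`, and at `λ = 1/2` the numerators of the
scalars cancel against their denominators: `h₁ = 1/2`, `g₁ = -1/2`, while `h₂` and `g₂` are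
`1/8 ∓ 1/(16(E' + 1))`.  Moving `ξᵢ` to the left through `D` and through functions of `E`, via
`[D, ξᵢ] = ∂/∂uᵢ` and `c(E) ξᵢ = ξᵢ c(E + 1)`, leaves `L^{(i)}` over `E'(E' + 1)`.

For `n = 1` one has `ξD = E ∂/∂u`, so `ξD - 2E' ∂/∂u = -(E' + 1/2) ∂/∂u` and `L^{(1)}` factors.
-/

open Finset.HasAntidiagonal (antidiagonal mem_antidiagonal)

lemma sum_range_sum_range_ite_add_eq {M : Type*} [AddCommMonoid M] {p N : ℕ} (hp : p < N)
    (f : ℕ → ℕ → M) :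
    (∑ i ∈ Finset.range N, ∑ j ∈ Finset.range N, if i + j = p then f i j else 0) =
      ∑ x ∈ antidiagonal p, f x.1 x.2 := by
  rw [← Finset.sum_product', ← Finset.sum_filter]
  refine Finset.sum_congr ?_ fun _ _ => rfl
  ext ⟨i, j⟩
  simp only [Finset.mem_filter, Finset.mem_product, Finset.mem_range, mem_antidiagonal]
  omega

lemma pderiv_comm {σ R : Type*} [CommSemiring R] (i j : σ) (φ : MvPolynomial σ R) :
    pderiv i (pderiv j φ) = pderiv j (pderiv i φ) := by
  classical
  ext d
  rcases eq_or_ne i j with rfl | hij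
  · rfl
  · simp only [coeff_pderiv, Finsupp.add_apply, Finsupp.single_apply, hij, hij.symm, if_false,
      add_zero, mul_right_comm, add_right_comm d]

lemma coeff_X_mul_pderiv {σ R : Type*} [CommSemiring R] (i : σ) (φ : MvPolynomial σ R)
    (d : σ →₀ ℕ) : coeff d (X i * pderiv i φ) = d i * coeff d φ := by
  classical
  by_cases hd : d i = 0
  · simp [coeff_X_mul', hd]
  · obtain ⟨e, rfl⟩ : ∃ e, d = Finsupp.single i 1 + e :=
      le_iff_exists_add.mp (Finsupp.single_le_iff.mpr (Nat.one_le_iff_ne_zero.mpr hd))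
    rw [coeff_X_mul, coeff_pderiv, add_comm e, mul_comm]
    simp [add_comm]

namespace LO

variable {n : ℕ}

section EulerOperator

lemma xiDeg_add (d e : Fin n ⊕ Fin n →₀ ℕ) : xiDeg (d + e) = xiDeg d + xiDeg e := by
  simp [xiDeg, Finset.sum_add_distrib]

lemma xiDeg_single_inr (i : Fin n) (a : ℕ) : xiDeg (Finsupp.single (Sum.inr i) a) = a := by
  simp [xiDeg, Finsupp.single_apply]

lemma coeff_cE (c : ℕ → ℂ) (φ : PolA n) (d : Fin n ⊕ Fin n →₀ ℕ) :
    coeff d (cE c φ) = c (xiDeg d) * coeff d φ := by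
  classical
  simp only [cE, coeff_sum, coeff_monomial, Finset.sum_ite_eq', mem_support_iff]
  split_ifs with hd
  · rfl
  · rw [not_not.mp hd, mul_zero]

lemma cE_zero (c : ℕ → ℂ) : cE c (0 : PolA n) = 0 := by
  simp [cE]

lemma cE_add (c : ℕ → ℂ) (φ ψ : PolA n) : cE c (φ + ψ) = cE c φ + cE c ψ := by
  ext d
  simp only [coeff_cE, coeff_add, mul_add]

lemma cE_smul (c : ℕ → ℂ) (a : ℂ) (φ : PolA n) : cE c (a • φ) = a • cE c φ := by
  ext d
  simp only [coeff_cE, coeff_smul, smul_eq_mul, mul_left_comm]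

lemma cE_const (a : ℂ) (φ : PolA n) : cE (fun _ => a) φ = a • φ := by
  ext d
  simp only [coeff_cE, coeff_smul, smul_eq_mul]

lemma cE_fun_add (b c : ℕ → ℂ) (φ : PolA n) : cE (fun m => b m + c m) φ = cE b φ + cE c φ := by
  ext d
  simp only [coeff_cE, coeff_add, add_mul]

lemma cE_fun_smul (a : ℂ) (c : ℕ → ℂ) (φ : PolA n) : cE (fun m => a * c m) φ = a • cE c φ := by
  ext d
  simp only [coeff_cE, coeff_smul, smul_eq_mul, mul_assoc]

lemma cE_cE (b c : ℕ → ℂ) (φ : PolA n) : cE b (cE c φ) = cE (fun m => b m * c m) φ := by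
  ext d
  simp only [coeff_cE, mul_assoc]

lemma cE_X_inr_mul (c : ℕ → ℂ) (i : Fin n) (φ : PolA n) :
    cE c (X (Sum.inr i) * φ) = X (Sum.inr i) * cE (fun m => c (m + 1)) φ := by
  classical
  ext d
  by_cases hd : d (Sum.inr i) = 0
  · simp [coeff_cE, coeff_X_mul', hd]
  · obtain ⟨e, rfl⟩ : ∃ e, d = Finsupp.single (Sum.inr i) 1 + e :=
      le_iff_exists_add.mp (Finsupp.single_le_iff.mpr (Nat.one_le_iff_ne_zero.mpr hd))
    simp only [coeff_cE, coeff_X_mul, xiDeg_add, xiDeg_single_inr, add_comm 1]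

lemma Elin_apply (φ : PolA n) : Elin n φ = cE (fun m => (m : ℂ)) φ := by
  ext d
  simp [Elin, coeff_cE, coeff_sum, coeff_X_mul_pderiv, xiDeg, Finset.sum_mul]

lemma E'lin_apply (φ : PolA n) : E'lin n φ = cE (fun m => (m : ℂ) + (n : ℂ) / 2) φ := by
  simp only [E'lin, LinearMap.add_apply, LinearMap.smul_apply, Module.End.one_apply, Elin_apply,
    cE_fun_add, cE_const]

end EulerOperator

section Divergence

lemma Dlin_apply (φ : PolA n) : Dlin n φ = Dop φ := by
  simp [Dlin, Dop]

lemma Dop_add (φ ψ : PolA n) : Dop (φ + ψ) = Dop φ + Dop ψ := by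
  simp only [← Dlin_apply, map_add]

lemma Dop_smul (a : ℂ) (φ : PolA n) : Dop (a • φ) = a • Dop φ := by
  simp only [← Dlin_apply, map_smul]

lemma Dop_iterate_zero (d : ℕ) : Dop^[d] (0 : PolA n) = 0 :=
  Function.iterate_fixed (by rw [← Dlin_apply, map_zero]) d

lemma Dop_X_inr (i : Fin n) : Dop (X (Sum.inr i) : PolA n) = 0 := by
  refine Finset.sum_eq_zero fun j _ => ?_
  rw [pderiv_comm, pderiv_X_of_ne Sum.inr_ne_inl, map_zero]

lemma Dop_pderiv (v : Fin n ⊕ Fin n) (φ : PolA n) : Dop (pderiv v φ) = pderiv v (Dop φ) := by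
  simp only [Dop, map_sum, pderiv_comm v]

lemma Dop_X_inr_mul (i : Fin n) (φ : PolA n) :
    Dop (X (Sum.inr i) * φ) = X (Sum.inr i) * Dop φ + pderiv (Sum.inl i) φ := by
  have term (j : Fin n) : pderiv (Sum.inl j) (pderiv (Sum.inr j) (X (Sum.inr i) * φ)) =
      X (Sum.inr i) * pderiv (Sum.inl j) (pderiv (Sum.inr j) φ) +
        if i = j then pderiv (Sum.inl j) φ else 0 := by
    rcases eq_or_ne i j with rfl | hij
    · simp [add_comm]
    · simp [hij]
  simp only [Dop, term, Finset.sum_add_distrib, Finset.mul_sum, Finset.sum_ite_eq,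
    Finset.mem_univ, if_true]

lemma Dop_Dop_X_inr_mul (i : Fin n) (φ : PolA n) :
    Dop (Dop (X (Sum.inr i) * φ)) =
      X (Sum.inr i) * Dop (Dop φ) + (2 : ℂ) • pderiv (Sum.inl i) (Dop φ) := by
  rw [Dop_X_inr_mul, Dop_add, Dop_X_inr_mul, Dop_pderiv]
  module

end Divergence

section StarProduct

lemma bh_zero (lam : ℂ) (φ : PolA n) : bh lam 0 φ = φ := by
  have scal_eq : hScal n lam 0 = fun _ => 1 := by
    funext m
    simp [hScal]
  rw [bh, Function.iterate_zero_apply, scal_eq, cE_const, one_smul]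

lemma bg_zero (lam : ℂ) (φ : PolA n) : bg lam 0 φ = φ := by
  have scal_eq : gScal n lam 0 = fun _ => 1 := by
    funext m
    simp [gScal]
  rw [bg, Function.iterate_zero_apply, scal_eq, cE_const, one_smul]

lemma bg_apply_zero (lam : ℂ) (d : ℕ) : bg lam d (0 : PolA n) = 0 := by
  rw [bg, Dop_iterate_zero, cE_zero]

lemma bh_X_inr (lam : ℂ) {d : ℕ} (hd : d ≠ 0) (i : Fin n) :
    bh lam d (X (Sum.inr i) : PolA n) = 0 := by
  obtain ⟨d, rfl⟩ := Nat.exists_eq_succ_of_ne_zero hd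
  rw [bh, Function.iterate_succ_apply, Dop_X_inr, Dop_iterate_zero, cE_zero]

lemma Nop_zero (φ ψ : PolA n) : Nop 0 φ ψ = φ * ψ := by
  simp [Nop]

lemma Nop_succ (k : ℕ) (φ ψ : PolA n) :
    Nop (k + 1) φ ψ =
      ((k : ℂ) + 1)⁻¹ • ∑ i, Nop k (pderiv (Sum.inr i) φ) (pderiv (Sum.inl i) ψ) := by
  simp only [Nop]
  rw [← (Fin.snocEquiv fun _ => Fin n).sum_comp, Fintype.sum_prod_type, ← Finset.smul_sum,
    smul_smul, Nat.factorial_succ, Nat.cast_mul, mul_inv, Nat.cast_succ]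
  simp only [Fin.snocEquiv_apply, List.ofFn_succ', Fin.snoc_castSucc, Fin.snoc_last,
    List.concat_eq_append, List.foldr_append, List.foldr_cons, List.foldr_nil]

lemma Nop_zero_left (k : ℕ) (ψ : PolA n) : Nop k 0 ψ = 0 := by
  induction k generalizing ψ with
  | zero => rw [Nop_zero, zero_mul]
  | succ k ih => simp only [Nop_succ, map_zero, ih, Finset.sum_const_zero, smul_zero]

lemma Nop_succ_one_left (k : ℕ) (ψ : PolA n) : Nop (k + 1) 1 ψ = 0 := by
  simp only [Nop_succ, pderiv_one, Nop_zero_left, Finset.sum_const_zero, smul_zero]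

lemma Nop_succ_X_inr_left (k : ℕ) (i : Fin n) (ψ : PolA n) :
    Nop (k + 1) (X (Sum.inr i)) ψ = ((k : ℂ) + 1)⁻¹ • Nop k 1 (pderiv (Sum.inl i) ψ) := by
  rw [Nop_succ, Finset.sum_eq_single i, pderiv_X_self]
  · intro j _ hji
    rw [pderiv_X_of_ne (Sum.inr_injective.ne hji.symm), Nop_zero_left]
  · simp

lemma Nop_one_X_inr_left (i : Fin n) (ψ : PolA n) :
    Nop 1 (X (Sum.inr i)) ψ = pderiv (Sum.inl i) ψ := by
  simp [Nop_succ_X_inr_left 0, Nop_zero]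

lemma Nop_add_two_X_inr_left (k : ℕ) (i : Fin n) (ψ : PolA n) :
    Nop (k + 2) (X (Sum.inr i)) ψ = 0 := by
  rw [Nop_succ_X_inr_left, Nop_succ_one_left, smul_zero]

theorem C_succ_X_inr_left (lam : ℂ) (p : ℕ) (i : Fin n) (ψ : PolA n) :
    LO.C n lam (p + 1) (X (Sum.inr i)) ψ =
      ∑ x ∈ antidiagonal (p + 1), bg lam x.2 (X (Sum.inr i) * bh lam x.1 ψ) +
      ∑ x ∈ antidiagonal p, bg lam x.2 (pderiv (Sum.inl i) (bh lam x.1 ψ)) := by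
  rw [LO.C, Finset.sum_eq_single_of_mem 0 (Finset.mem_range.mpr p.succ.succ_pos)]
  swap
  · intro d _ hd
    simp only [bh_X_inr lam hd, Nop_zero_left, bg_apply_zero, ite_self, Finset.sum_const_zero]
  rw [Finset.sum_comm, Finset.sum_range_succ', Finset.sum_range_succ']
  simp only [bh_zero, zero_add, add_zero, Nop_zero, Nop_one_X_inr_left, Nop_add_two_X_inr_left,
    bg_apply_zero, ite_self, Finset.sum_const_zero]
  rw [sum_range_sum_range_ite_add_eq p.succ.lt_succ_self, add_comm]
  simp only [add_right_comm _ 1, Nat.add_right_cancel_iff,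
    sum_range_sum_range_ite_add_eq (Nat.lt_succ_of_lt p.lt_succ_self)]

end StarProduct

section HalfDensities

lemma natCast_add_natCast_div_two_add_ne_zero (m n : ℕ) {k : ℕ} (hk : k ≠ 0) :
    (m : ℂ) + (n : ℂ) / 2 + (k : ℂ) / 2 ≠ 0 := by
  have h : ((2 * m + n + k : ℕ) : ℂ) ≠ 0 := Nat.cast_ne_zero.mpr (by omega)
  contrapose! h
  push_cast
  linear_combination 2 * h

lemma natCast_add_natCast_div_two_add_one_ne_zero (m n : ℕ) : (m : ℂ) + (n : ℂ) / 2 + 1 ≠ 0 := by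
  simpa using natCast_add_natCast_div_two_add_ne_zero m n two_ne_zero

lemma hScal_half_one (n m : ℕ) : hScal n (1 / 2) 1 m = 1 / 2 := by
  have hden : 2 * (m : ℂ) + 0 + n + 1 ≠ 0 := fun h =>
    natCast_add_natCast_div_two_add_ne_zero m n one_ne_zero
      (by push_cast; linear_combination h / 2)
  have factor_zero : ((m : ℂ) + 0 + 1 / 2 * (n + 1)) / (2 * m + 0 + n + 1) = 1 / 2 := by
    rw [div_eq_iff hden]
    ring
  simp only [hScal, Finset.prod_range_one, Nat.factorial_one, Nat.cast_one, Nat.cast_zero,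
    factor_zero]
  norm_num

lemma gScal_half_one (n m : ℕ) : gScal n (1 / 2) 1 m = -(1 / 2) := by
  have hden : 2 * (m : ℂ) + 0 + n + 1 ≠ 0 := fun h =>
    natCast_add_natCast_div_two_add_ne_zero m n one_ne_zero
      (by push_cast; linear_combination h / 2)
  have factor_zero : (-(m : ℂ) - 0 - 1 / 2 * (n + 1)) / (2 * m + 0 + n + 1) = -(1 / 2) := by
    rw [div_eq_iff hden]
    ring
  simp only [gScal, Finset.prod_range_one, Nat.factorial_one, Nat.cast_one, Nat.cast_zero,
    factor_zero]
  norm_num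

lemma hScal_half_two (n m : ℕ) :
    hScal n (1 / 2) 2 m = 1 / 8 - 1 / 16 * ((m : ℂ) + (n : ℂ) / 2 + 1)⁻¹ := by
  have hm := natCast_add_natCast_div_two_add_one_ne_zero m n
  have hden : 2 * (m : ℂ) + 1 + n + 2 ≠ 0 := fun h =>
    natCast_add_natCast_div_two_add_ne_zero m n three_ne_zero
      (by push_cast; linear_combination h / 2)
  have factor_zero : ((m : ℂ) + 0 + 1 / 2 * (n + 1)) / (2 * m + 0 + n + 2) =
      1 / 2 - 1 / 4 * ((m : ℂ) + (n : ℂ) / 2 + 1)⁻¹ := by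
    rw [show 2 * (m : ℂ) + 0 + n + 2 = 2 * (m + n / 2 + 1) by ring,
      div_eq_iff (mul_ne_zero two_ne_zero hm)]
    linear_combination 1 / 2 * inv_mul_cancel₀ hm
  have factor_one : ((m : ℂ) + 1 + 1 / 2 * (n + 1)) / (2 * m + 1 + n + 2) = 1 / 2 := by
    rw [div_eq_iff hden]
    ring
  simp only [hScal, Finset.prod_range_succ, Finset.prod_range_zero, Nat.factorial_two, Nat.cast_one,
    Nat.cast_zero, Nat.cast_ofNat, factor_zero, factor_one]
  ring

lemma gScal_half_two (n m : ℕ) :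
    gScal n (1 / 2) 2 m = 1 / 8 + 1 / 16 * ((m : ℂ) + (n : ℂ) / 2 + 1)⁻¹ := by
  have hm := natCast_add_natCast_div_two_add_one_ne_zero m n
  have hden : 2 * (m : ℂ) + 0 + n + 1 ≠ 0 := fun h =>
    natCast_add_natCast_div_two_add_ne_zero m n one_ne_zero
      (by push_cast; linear_combination h / 2)
  have factor_zero : (-(m : ℂ) - 0 - 1 / 2 * (n + 1)) / (2 * m + 0 + n + 1) = -(1 / 2) := by
    rw [div_eq_iff hden]
    ring
  have factor_one : (-(m : ℂ) - 1 - 1 / 2 * (n + 1)) / (2 * m + 1 + n + 1) =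
      -(1 / 2) - 1 / 4 * ((m : ℂ) + (n : ℂ) / 2 + 1)⁻¹ := by
    rw [show 2 * (m : ℂ) + 1 + n + 1 = 2 * (m + n / 2 + 1) by ring,
      div_eq_iff (mul_ne_zero two_ne_zero hm)]
    linear_combination 1 / 2 * inv_mul_cancel₀ hm
  simp only [gScal, Finset.prod_range_succ, Finset.prod_range_zero, Nat.factorial_two, Nat.cast_one,
    Nat.cast_zero, Nat.cast_ofNat, factor_zero, factor_one]
  ring

lemma bh_half_one (φ : PolA n) : bh (1 / 2) 1 φ = (1 / 2 : ℂ) • Dop φ := by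
  rw [bh, Function.iterate_one, funext (hScal_half_one n), cE_const]

lemma bg_half_one (φ : PolA n) : bg (1 / 2) 1 φ = -(1 / 2 : ℂ) • Dop φ := by
  rw [bg, Function.iterate_one, funext (gScal_half_one n), cE_const]

/-- The operator `(E' + 1)⁻¹`; no scalar `m + n/2 + 1` vanishes, so it inverts `E' + 1`. -/
noncomputable def E'AddOneInv (φ : PolA n) : PolA n :=
  cE (fun m => ((m : ℂ) + (n : ℂ) / 2 + 1)⁻¹) φ

lemma bh_half_two (φ : PolA n) :
    bh (1 / 2) 2 φ = (1 / 8 : ℂ) • Dop (Dop φ) - (1 / 16 : ℂ) • E'AddOneInv (Dop (Dop φ)) := by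
  simp only [E'AddOneInv, bh, funext (hScal_half_two n), Function.iterate_succ_apply,
    Function.iterate_zero_apply, sub_eq_add_neg, ← neg_mul, cE_fun_add, cE_fun_smul, cE_const,
    neg_smul]

lemma bg_half_two (φ : PolA n) :
    bg (1 / 2) 2 φ = (1 / 8 : ℂ) • Dop (Dop φ) + (1 / 16 : ℂ) • E'AddOneInv (Dop (Dop φ)) := by
  simp only [E'AddOneInv, bg, funext (gScal_half_two n), Function.iterate_succ_apply,
    Function.iterate_zero_apply, cE_fun_add, cE_fun_smul, cE_const]

theorem C_half_two_X_inr_left (i : Fin n) (ψ : PolA n) :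
    LO.C n (1 / 2) 2 (X (Sum.inr i)) ψ =
      (1 / 16 : ℂ) • E'AddOneInv
          (X (Sum.inr i) * Dop (Dop ψ) + (2 : ℂ) • pderiv (Sum.inl i) (Dop ψ)) -
        (1 / 16 : ℂ) • (X (Sum.inr i) * E'AddOneInv (Dop (Dop ψ))) := by
  rw [C_succ_X_inr_left]
  simp only [Finset.Nat.sum_antidiagonal_succ, Finset.Nat.antidiagonal_zero, Finset.sum_singleton,
    zero_add, Nat.reduceAdd]
  simp only [bh_zero, bg_zero, bh_half_one, bg_half_one, bh_half_two, bg_half_two,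
    Dop_Dop_X_inr_mul, mul_sub, mul_smul_comm, Dop_smul, Derivation.map_smul]
  rw [Dop_X_inr_mul, Dop_pderiv]
  module

lemma cE_E'AddOneInv (φ : PolA n) :
    cE (fun m => ((m : ℂ) + (n : ℂ) / 2) * ((m : ℂ) + (n : ℂ) / 2 + 1))
      (E'AddOneInv φ) = E'lin n φ := by
  simp only [E'AddOneInv, cE_cE, E'lin_apply, mul_assoc,
    mul_inv_cancel₀ (natCast_add_natCast_div_two_add_one_ne_zero _ n), mul_one]

lemma cE_X_inr_mul_E'AddOneInv (i : Fin n) (φ : PolA n) :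
    cE (fun m => ((m : ℂ) + (n : ℂ) / 2) * ((m : ℂ) + (n : ℂ) / 2 + 1))
        (X (Sum.inr i) * E'AddOneInv φ) =
      (E'lin n + 1) (X (Sum.inr i) * φ) := by
  rw [LinearMap.add_apply, Module.End.one_apply, E'lin_apply, E'AddOneInv,
    cE_X_inr_mul, cE_X_inr_mul, cE_cE, ← mul_add]
  congr 1
  ext d
  have h := mul_inv_cancel₀ (natCast_add_natCast_div_two_add_one_ne_zero (xiDeg d) n)
  simp only [coeff_cE, coeff_add, Nat.cast_succ]
  linear_combination ((xiDeg d : ℂ) + n / 2 + 2) * coeff d φ * h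

theorem cE_C_half_two_X_inr_left (i : Fin n) (ψ : PolA n) :
    cE (fun m => ((m : ℂ) + (n : ℂ) / 2) * ((m : ℂ) + (n : ℂ) / 2 + 1))
      (LO.C n (1 / 2) 2 (X (Sum.inr i)) ψ) = Lop n i ψ := by
  rw [C_half_two_X_inr_left, sub_eq_add_neg, ← neg_smul, cE_add, cE_smul, cE_smul,
    cE_E'AddOneInv, cE_X_inr_mul_E'AddOneInv]
  simp only [Lop, Dlin_apply, LinearMap.smul_apply, LinearMap.comp_apply, LinearMap.sub_apply,
    LinearMap.add_apply, Module.End.one_apply, LinearMap.mulLeft_apply, Derivation.coeFn_coe,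
    map_add, map_smul]
  module

end HalfDensities

section OneDimensional

lemma X_inr_mul_Dop_one (φ : PolA 1) :
    X (Sum.inr 0) * Dop φ = Elin 1 (pderiv (Sum.inl 0) φ) := by
  simp [Dop, Elin, pderiv_comm (Sum.inl (0 : Fin 1))]

theorem Lop_one_zero :
    Lop 1 0 = (1 / 16 : ℂ) • ((E'lin 1 + (1 / 2 : ℂ) • 1) ∘ₗ
      ((pderiv (Sum.inl 0)).toLinearMap ∘ₗ (pderiv (Sum.inl 0)).toLinearMap ∘ₗ
        (pderiv (Sum.inr 0)).toLinearMap)) := by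
  refine LinearMap.ext fun ψ => ?_
  have Dop_eq : Dop ψ = pderiv (Sum.inl 0) (pderiv (Sum.inr 0) ψ) := by simp [Dop]
  simp only [Lop, Dlin_apply, LinearMap.smul_apply, LinearMap.comp_apply, LinearMap.sub_apply,
    LinearMap.add_apply, Module.End.one_apply, LinearMap.mulLeft_apply, Derivation.coeFn_coe,
    X_inr_mul_Dop_one, E'lin, Dop_eq]
  module

lemma E'lin_add_half_one_apply (φ : PolA 1) :
    (E'lin 1 + (1 / 2 : ℂ) • 1) φ = cE (fun k => (k : ℂ) + 1) φ := by
  rw [LinearMap.add_apply, LinearMap.smul_apply, Module.End.one_apply, E'lin_apply, ← cE_const,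
    ← cE_fun_add]
  congr! 2
  push_cast
  ring

end OneDimensional

end LO

/-- for `n = 1`, `L^{(1)} = (1/16)(E' + 1/2) ∘ ∂³/(∂u₁²∂ξ₁)`;
equivalently `E'(E'+1)(C^{1/2}_2(ξ₁,ψ)) = (1/16)(E'+1/2)(∂³ψ/(∂u₁²∂ξ₁))`
(here `E'` acts on `A^k` by `k + 1/2`). -/
theorem stmt_17 :
    LO.Lop 1 0 =
      (1 / 16 : ℂ) • ((LO.E'lin 1 + (1 / 2 : ℂ) • 1) ∘ₗ
        ((pderiv (Sum.inl (0 : Fin 1))).toLinearMap ∘ₗ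
          (pderiv (Sum.inl (0 : Fin 1))).toLinearMap ∘ₗ
          (pderiv (Sum.inr (0 : Fin 1))).toLinearMap)) ∧
    ∀ ψ : PolA 1,
      LO.cE (fun k => ((k : ℂ) + 1 / 2) * ((k : ℂ) + 1 / 2 + 1))
          (LO.C 1 (1 / 2) 2 (X (Sum.inr 0)) ψ) =
        (1 / 16 : ℂ) •
          LO.cE (fun k => (k : ℂ) + 1)
            (pderiv (Sum.inl (0 : Fin 1))
              (pderiv (Sum.inl (0 : Fin 1)) (pderiv (Sum.inr (0 : Fin 1)) ψ))) := by
  refine ⟨LO.Lop_one_zero, fun ψ => ?_⟩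
  calc
    _ = LO.Lop 1 0 ψ := by
      rw [← LO.cE_C_half_two_X_inr_left, Nat.cast_one]
    _ = (1 / 16 : ℂ) • (LO.E'lin 1 + (1 / 2 : ℂ) • 1) (pderiv (Sum.inl 0)
          (pderiv (Sum.inl 0) (pderiv (Sum.inr 0) ψ))) := by
      rw [LO.Lop_one_zero]
      rfl
    _ = _ := by
      rw [LO.E'lin_add_half_one_apply]
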